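/- Let Y be a geodesic k-hyperbolic space and let γ be a bi-infinite (1, 20k)-quasigeodesic invariant up to 50k-Hausdorff distance under an isometry g (i.e., d_Haus(gγ, γ) ≤ 50k). Fix p ∈ γ and ℓ ≥ 1 with d(p, g^{ℓn}p) ≥ 100k|n| for all n ∈ ℤ, let I be a geodesic from p to g^ℓp and β = ∪_{n∈ℤ} g^{ℓn}I. Then d_Haus(β, γ) ≤ 50k, and β is a quasiline: it is (λ,λ)-quasi-isometric to ℝ for a constant λ depending only on k. -/

import Mathlib

open Filter Topology

/-- Twice the Gromov product of `x` and `y` based at `w`. -/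
noncomputable def gpp {Y : Type} [MetricSpace Y] (w x y : Y) : ℝ :=
  dist w x + dist w y - dist x y

/-- Four point hyperbolicity. -/
def Hyp4 (Y : Type) [MetricSpace Y] (k : ℝ) : Prop :=
  ∀ x y z w : Y,
    dist x y + dist z w ≤ max (dist x z + dist y w) (dist x w + dist y z) + 2 * k

/-- `(1,20k)`-quasigeodesic lines. -/
def QG {Y : Type} [MetricSpace Y] (k : ℝ) (γ : ℝ → Y) : Prop :=
  ∀ s t : ℝ, |s - t| - 20 * k ≤ dist (γ s) (γ t) ∧ dist (γ s) (γ t) ≤ |s - t| + 20 * k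

theorem gpp_comm {Y : Type} [MetricSpace Y] (w x y : Y) : gpp w x y = gpp w y x := by
  unfold gpp; rw [dist_comm x y]; ring

theorem gpp_trans {Y : Type} [MetricSpace Y] {k : ℝ} (h : Hyp4 Y k) {w x y z : Y} {c : ℝ}
    (h1 : c < gpp w x y) (h2 : c < gpp w y z) : c - 2 * k < gpp w x z := by
  have := h x z w y
  unfold gpp at *
  rw [dist_comm x w, dist_comm z w, dist_comm z y] at this
  rcases le_max_iff.1 (sub_le_iff_le_add.2 this) with h3 | h3 <;> linarith

theorem QG.low {Y : Type} [MetricSpace Y] {k : ℝ} {γ : ℝ → Y} (h : QG k γ) (s t : ℝ) :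
    t - s - 20 * k ≤ dist (γ s) (γ t) := by
  have := (h s t).1
  have h2 := neg_abs_le (s - t)
  linarith

theorem QG.up {Y : Type} [MetricSpace Y] {k : ℝ} {γ : ℝ → Y} (h : QG k γ) {s t : ℝ}
    (hst : s ≤ t) : dist (γ s) (γ t) ≤ t - s + 20 * k := by
  have := (h s t).2
  rw [abs_of_nonpos (by linarith)] at this
  linarith

theorem lemA {Y : Type} [MetricSpace Y] {k : ℝ} (hk : 0 < k) (h : Hyp4 Y k) {γ γ' : ℝ → Y}
    (hγ : QG k γ) (hγ' : QG k γ') (D : ℝ) (hD : ∀ s, ∃ u, dist (γ' s) (γ u) ≤ D) (t0 : ℝ) :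
    ∃ N0 : ℝ, ∀ N ≥ N0, gpp (γ' t0) (γ (-N)) (γ N) ≤ 64 * k := by
  set x := γ' t0 with hx
  set d0 := dist x (γ 0) with hd0
  have hd0n : 0 ≤ d0 := dist_nonneg
  have hDn : 0 ≤ D := by
    obtain ⟨u, hu⟩ := hD 0
    exact dist_nonneg.trans hu
  set M := |t0| + 125 * k + d0 + D with hM
  have ht1 := le_abs_self t0
  have ht2 := neg_abs_le t0
  obtain ⟨u, hu⟩ := hD (-M)
  obtain ⟨v, hv⟩ := hD M
  set a' := γ' (-M)
  set b' := γ' M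
  have hxa : 105 * k + d0 + D ≤ dist x a' := by
    have := hγ'.low (-M) t0
    rw [dist_comm] at this
    linarith
  have hxb : 105 * k + d0 + D ≤ dist x b' := by
    have := hγ'.low t0 M
    linarith
  have hab : gpp x a' b' ≤ 60 * k := by
    have e1 := hγ'.up (s := -M) (t := t0) (by linarith)
    have e2 := hγ'.up (s := t0) (t := M) (by linarith)
    have e3 := hγ'.low (-M) M
    rw [dist_comm] at e1
    unfold gpp
    linarith
  have pos : ∀ (w : Y) (u : ℝ), dist w (γ u) ≤ D → 105 * k + d0 + D ≤ dist x w → 0 ≤ u →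
      ∀ N, |u| ≤ N → 64 * k < gpp x w (γ N) := by
    intro w u hw hxw hu0 N hN
    have hN' := (le_abs_self u).trans hN
    have e1 := hγ.up hN'
    have e2 := hγ.low 0 N
    have e3 := dist_triangle w (γ u) (γ N)
    have e4 := dist_triangle (γ 0) x (γ N)
    rw [dist_comm (γ 0) x] at e4
    unfold gpp
    linarith
  have neg : ∀ (w : Y) (u : ℝ), dist w (γ u) ≤ D → 105 * k + d0 + D ≤ dist x w → u ≤ 0 →
      ∀ N, |u| ≤ N → 64 * k < gpp x w (γ (-N)) := by
    intro w u hw hxw hu0 N hN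
    have hN' := (neg_le_abs u).trans hN
    have e1 := hγ.up (s := -N) (t := u) (by linarith)
    have e2 := hγ.low (-N) 0
    have e3 := dist_triangle w (γ u) (γ (-N))
    have e4 := dist_triangle (γ 0) x (γ (-N))
    rw [dist_comm (γ 0) x] at e4
    rw [dist_comm] at e1 e2
    unfold gpp
    linarith
  refine ⟨max |u| |v|, fun N hN => ?_⟩
  have hNu : |u| ≤ N := (le_max_left _ _).trans hN
  have hNv : |v| ≤ N := (le_max_right _ _).trans hN
  by_contra hcon
  push Not at hcon
  rcases le_total 0 u with h1 | h1 <;> rcases le_total 0 v with h2 | h2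
  · have p1 := pos a' u hu hxa h1 N hNu
    have p2 := pos b' v hv hxb h2 N hNv
    rw [gpp_comm] at p2
    have := gpp_trans h p1 p2
    linarith
  · have p1 := pos a' u hu hxa h1 N hNu
    have p2 := neg b' v hv hxb h2 N hNv
    rw [gpp_comm] at p2 hcon
    have q := gpp_trans h p1 hcon
    have := gpp_trans h q (by linarith : 64 * k - 2 * k < gpp x (γ (-N)) b')
    linarith
  · have p1 := neg a' u hu hxa h1 N hNu
    have p2 := pos b' v hv hxb h2 N hNv
    rw [gpp_comm] at p2
    have q := gpp_trans h p1 hcon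
    have := gpp_trans h q (by linarith : 64 * k - 2 * k < gpp x (γ N) b')
    linarith
  · have p1 := neg a' u hu hxa h1 N hNu
    have p2 := neg b' v hv hxb h2 N hNv
    rw [gpp_comm] at p2
    have := gpp_trans h p1 p2
    linarith

theorem lemB {Y : Type} [MetricSpace Y] {k : ℝ} (hk : 0 < k) (h : Hyp4 Y k) {a b x1 x2 y : Y}
    (h1 : gpp x1 a b ≤ 64 * k) (h2 : gpp x2 a b ≤ 64 * k)
    (hy : dist x1 y + dist y x2 = dist x1 x2) (hL : 100 * k ≤ dist x1 x2) :
    gpp y a b ≤ 66 * k := by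
  have ea := h y a x1 x2
  have eb := h y b x1 x2
  have em := h a x2 x1 b
  have em' := h a x1 x2 b
  have ta1 := dist_triangle y x1 a
  have tb1 := dist_triangle y x1 b
  have ta2 := dist_triangle y x2 a
  have tb2 := dist_triangle y x2 b
  unfold gpp at *
  simp only [dist_comm x1 y, dist_comm a x1, dist_comm a x2, dist_comm b x1, dist_comm b x2,
    dist_comm x2 x1] at *
  rcases le_max_iff.1 (sub_le_iff_le_add.2 ea) with ha | ha <;>
  rcases le_max_iff.1 (sub_le_iff_le_add.2 eb) with hb | hb <;>
  rcases le_max_iff.1 (sub_le_iff_le_add.2 em) with hm | hm <;>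
  rcases le_max_iff.1 (sub_le_iff_le_add.2 em') with hm' | hm' <;> linarith

theorem sup_approx (P : ℝ → Prop) (lo hi η : ℝ) (hη : 0 < η) (hlh : lo ≤ hi) (h0 : P lo) :
    ∃ σ, lo ≤ σ ∧ σ ≤ hi ∧ P σ ∧ ∀ s, σ + η ≤ s → s ≤ hi → ¬ P s := by
  set S := {s | lo ≤ s ∧ s ≤ hi ∧ P s} with hS
  have hne : S.Nonempty := ⟨lo, le_rfl, hlh, h0⟩
  have hb : BddAbove S := ⟨hi, fun s hs => hs.2.1⟩
  obtain ⟨σ, hσ, hlt⟩ := exists_lt_of_lt_csSup hne (by linarith : sSup S - η < sSup S)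
  refine ⟨σ, hσ.1, hσ.2.1, hσ.2.2, fun s hs hs2 hP => ?_⟩
  have : s ≤ sSup S := le_csSup hb ⟨by linarith [hσ.1], hs2, hP⟩
  linarith

theorem lemC {Y : Type} [MetricSpace Y] {k : ℝ} (hk : 0 < k) (h : Hyp4 Y k) {γ : ℝ → Y}
    (hγ : QG k γ) (y : Y) (N : ℝ) (hN : 0 ≤ N) (hy : gpp y (γ (-N)) (γ N) ≤ 66 * k) :
    ∃ s, dist y (γ s) ≤ 50 * k := by
  by_contra hcon
  push Not at hcon
  set a := γ (-N) with ha
  set b := γ N with hb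
  set H := gpp y a b with hH
  have hHd : H = dist y a + dist y b - dist a b := rfl
  obtain ⟨σ0, h00, h01, hL, hL'⟩ := sup_approx (fun s => H + 6 * k < gpp y a (γ s)) (-N) N (k/2)
    (by linarith) (by linarith) (by
      have := hcon (-N)
      show H + 6 * k < dist y a + dist y a - dist a a
      rw [dist_self]; linarith)
  obtain ⟨σ, h10, h11, hR, hR'⟩ := sup_approx (fun s => H + 6 * k < gpp y (γ (-s)) b) (-N) (-σ0)
    (k/2) (by linarith) (by linarith) (by
      have := hcon N
      show H + 6 * k < dist y (γ (- -N)) + dist y b - dist (γ (- -N)) b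
      rw [neg_neg, ← hb, dist_self]; linarith)
  set σ1 := -σ with hσ1
  have hT : σ1 - σ0 ≤ 39 * k := by
    by_contra hT
    push Not at hT
    have u1 := hL' (σ0 + k/2) le_rfl (by linarith)
    have v1 := hR' (σ + k/2) le_rfl (by linarith)
    simp only [not_lt, gpp] at u1 v1
    have e1 := hγ.up (s := -N) (t := σ0 + k/2) (by linarith)
    have e2 := hγ.up (s := -(σ + k/2)) (t := N) (by linarith)
    have e3 := hγ.low (-N) N
    have c1 := hcon (σ0 + k/2)
    have c2 := hcon (-(σ + k/2))
    rw [← ha] at e1 e3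
    rw [← hb] at e2 e3
    linarith
  have h01' : σ0 ≤ σ1 := by linarith
  have edge : ∀ s t, s ≤ t → t - s ≤ 6.5 * k → H + 6 * k < gpp y (γ s) (γ t) := by
    intro s t hst hts
    have e1 := hγ.up hst
    have c1 := hcon s
    have c2 := hcon t
    unfold gpp
    linarith
  set τ := (σ1 - σ0) / 6 with hτ
  have hτ0 : 0 ≤ τ := by rw [hτ]; linarith
  have hτ1 : τ ≤ 6.5 * k := by rw [hτ]; linarith
  have g1 := edge σ0 (σ0 + τ) (by linarith) (by linarith)
  have g2 := edge (σ0 + τ) (σ0 + 2 * τ) (by linarith) (by linarith)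
  have g3 := edge (σ0 + 2 * τ) (σ0 + 3 * τ) (by linarith) (by linarith)
  have g4 := edge (σ0 + 3 * τ) (σ0 + 4 * τ) (by linarith) (by linarith)
  have g5 := edge (σ0 + 4 * τ) (σ0 + 5 * τ) (by linarith) (by linarith)
  have g6 := edge (σ0 + 5 * τ) σ1 (by linarith) (by linarith)
  have k1 := gpp_trans h hL g1
  have k2 := gpp_trans h g2 g3
  have k3 := gpp_trans h g4 g5
  have k4 := gpp_trans h g6 hR
  have m1 := gpp_trans h k1 k2
  have m2 := gpp_trans h k3 k4
  have := gpp_trans h m1 m2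
  linarith

theorem lemPair {Y : Type} [MetricSpace Y] {k : ℝ} (hk : 0 < k) (h : Hyp4 Y k) {a b x x' z : Y}
    (hz : gpp z a b ≤ 60 * k) (hx : gpp x a b ≤ 64 * k) (hx' : gpp x' a b ≤ 64 * k)
    (hL : 100 * k ≤ dist x x') (h1 : gpp z a b + 2 * k < gpp z a x)
    (h2 : gpp z a x' ≤ gpp z a b + 2 * k) : gpp z x x' ≤ 64 * k := by
  by_contra hcon
  push Not at hcon
  have hbx : gpp z x b ≤ gpp z a b + 2 * k := by
    by_contra hc
    push Not at hc
    have := gpp_trans h h1 hc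
    linarith
  have hbx' : gpp z x' b ≤ gpp z a b + 4 * k := by
    by_contra hc
    push Not at hc
    have := gpp_trans h (by linarith : gpp z a b + 4 * k < gpp z x x') hc
    linarith
  have hax : gpp z a x ≤ gpp z a b + 4 * k := by
    by_contra hc
    push Not at hc
    have := gpp_trans h hc (by linarith : gpp z a b + 4 * k < gpp z x x')
    linarith
  unfold gpp at *
  simp only [dist_comm a x, dist_comm a x'] at *
  linarith

theorem lemProj {Y : Type} [MetricSpace Y] {k : ℝ} (h : Hyp4 Y k) {x x' y z : Y}
    (hy : dist x y = (dist z x + dist x x' - dist z x') / 2)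
    (hy' : dist y x' = dist x x' - dist x y) (hg : gpp z x x' ≤ 64 * k) :
    dist z y ≤ 34 * k := by
  have e := h z y x x'
  unfold gpp at hg
  rw [dist_comm y x] at e
  rcases le_max_iff.1 (sub_le_iff_le_add.2 e) with h1 | h1 <;> linarith

theorem coarse (u : ℤ → ℝ) (c e S : ℝ) (hc : 0 < c)
    (h1 : ∀ n m : ℤ, c * |((n - m : ℤ) : ℝ)| - e ≤ |u n - u m|)
    (h2 : ∀ n, |u n - u (n + 1)| ≤ S) (B : ℝ) : ∃ n, u n < B := by
  by_contra hcon
  push Not at hcon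
  have hS : 0 ≤ S := (abs_nonneg _).trans (h2 0)
  obtain ⟨K, hK⟩ := exists_nat_gt ((S + |e| + (u 0 - B)) / c)
  have hK' : S + |e| + (u 0 - B) < K * c := (div_lt_iff₀ hc).1 hK
  have he := le_abs_self e
  have he0 := abs_nonneg e
  have hB := hcon 0
  -- `u (-K) ≥ u 0`
  have hKge : u 0 ≤ u (-(K : ℤ)) := by
    by_contra hlt
    push Not at hlt
    have := h1 0 (-(K : ℤ))
    rw [abs_of_pos (by linarith : 0 < u 0 - u (-(K : ℤ)))] at this
    have hb := hcon (-(K : ℤ))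
    push_cast at this
    rw [abs_of_nonneg (by simp)] at this
    linarith
  have far : ∀ n : ℕ, S < |u n - u (-(K : ℤ))| := by
    intro n
    have := h1 n (-(K : ℤ))
    push_cast at this
    rw [abs_of_nonneg (by have := n.cast_nonneg (α := ℝ); have := K.cast_nonneg (α := ℝ); linarith)]
      at this
    have hn : 0 ≤ c * (n : ℝ) := by positivity
    linarith
  have below : ∀ n : ℕ, u n < u (-(K : ℤ)) := by
    intro n
    induction n with
    | zero =>
      have := far 0
      rcases hKge.lt_or_eq with h | h
      · simpa using h
      · simp only [Nat.cast_zero] at this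
        rw [h, sub_self, abs_zero] at this
        linarith
    | succ n ih =>
      by_contra hge
      push Not at hge
      have f := far (n + 1)
      have s := (abs_le.1 (h2 n)).1
      push_cast at f hge
      rw [abs_of_nonneg (by linarith)] at f
      linarith
  obtain ⟨n, hn⟩ := exists_nat_gt ((|e| + (u (-(K : ℤ)) - B)) / c)
  have hn' := (div_lt_iff₀ hc).1 hn
  have f := h1 n 0
  have hb := below n
  have hb2 := hcon n
  simp only [sub_zero, Int.cast_natCast, Nat.abs_cast] at f
  have : |u n - u 0| ≤ u (-(K : ℤ)) - B := abs_le.2 ⟨by linarith, by linarith⟩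
  linarith

theorem int_change (Q : ℤ → Prop) (n1 n2 : ℤ) (hle : n1 ≤ n2) (h : ¬ (Q n1 ↔ Q n2)) :
    ∃ n, n1 ≤ n ∧ n < n2 ∧ ¬ (Q n ↔ Q (n + 1)) := by
  by_contra hcon
  push Not at hcon
  have key : ∀ n, n1 ≤ n → n ≤ n2 → (Q n1 ↔ Q n) := by
    intro n hn
    induction n, hn using Int.le_induction with
    | base => intro _; rfl
    | succ n hn ih =>
      intro hn2
      have := hcon n hn (by omega)
      have := ih (by omega)
      tauto
  exact h (key n2 hle le_rfl)

theorem eventually_window (P : ℤ → ℝ → Prop) (h : ∀ n, ∃ N0 : ℝ, ∀ N ≥ N0, P n N) (n1 n2 : ℤ) :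
    ∃ N0 : ℝ, ∀ N ≥ N0, ∀ n, n1 ≤ n → n ≤ n2 → P n N := by
  have : ∀ᶠ N : ℝ in atTop, ∀ n ∈ Finset.Icc n1 n2, P n N := by
    rw [Filter.eventually_all_finset]
    intro n _
    exact eventually_atTop.2 (h n)
  obtain ⟨N0, hN⟩ := eventually_atTop.1 this
  exact ⟨N0, fun N hN0 n h1 h2 => hN N hN0 n (Finset.mem_Icc.2 ⟨h1, h2⟩)⟩

theorem zpow_close {Y : Type} [MetricSpace Y] {k : ℝ} {γ : ℝ → Y} (g : Y ≃ᵢ Y)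
    (hg1 : ∀ s : ℝ, ∃ u : ℝ, dist (g (γ s)) (γ u) ≤ 50 * k)
    (hg2 : ∀ s : ℝ, ∃ u : ℝ, dist (γ s) (g (γ u)) ≤ 50 * k) (m : ℤ) :
    ∃ D : ℝ, ∀ s, ∃ u, dist ((g ^ m) (γ s)) (γ u) ≤ D := by
  induction m using Int.induction_on with
  | zero => exact ⟨0, fun s => ⟨s, by simp⟩⟩
  | succ i ih =>
    obtain ⟨D, hD⟩ := ih
    refine ⟨D + 50 * k, fun s => ?_⟩
    obtain ⟨u, hu⟩ := hD s
    obtain ⟨v, hv⟩ := hg1 u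
    refine ⟨v, ?_⟩
    rw [add_comm, zpow_add, zpow_one, IsometryEquiv.mul_apply]
    have := dist_triangle (g ((g ^ (i : ℤ)) (γ s))) (g (γ u)) (γ v)
    rw [g.dist_eq] at this
    linarith
  | pred i ih =>
    obtain ⟨D, hD⟩ := ih
    refine ⟨D + 50 * k, fun s => ?_⟩
    obtain ⟨u, hu⟩ := hD s
    obtain ⟨v, hv⟩ := hg2 u
    refine ⟨v, ?_⟩
    have e : g ((g ^ (-(i : ℤ) - 1)) (γ s)) = (g ^ (-(i : ℤ))) (γ s) := by
      rw [← IsometryEquiv.mul_apply, ← zpow_one_add]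
      congr 2
      ring
    rw [← g.dist_eq, e]
    have := dist_triangle ((g ^ (-(i : ℤ))) (γ s)) (γ u) (g (γ v))
    linarith

/-- The two Hausdorff bounds for an abstract broken line with vertices `x n` and edges `E n r`. -/
theorem main_bounds {Y : Type} [MetricSpace Y] {k : ℝ} (hk : 0 < k) (h : Hyp4 Y k) {γ : ℝ → Y}
    (hγ : QG k γ) (L : ℝ) (x : ℤ → Y) (E : ℤ → ℝ → Y)
    (hx : ∀ n, ∃ N0 : ℝ, ∀ N ≥ N0, gpp (x n) (γ (-N)) (γ N) ≤ 64 * k)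
    (hfar : ∀ n m : ℤ, 100 * k * |((n - m : ℤ) : ℝ)| ≤ dist (x n) (x m))
    (hL : ∀ n, dist (x n) (x (n + 1)) = L)
    (hE1 : ∀ n, ∀ r ∈ Set.Icc 0 L, dist (x n) (E n r) = r)
    (hE2 : ∀ n, ∀ r ∈ Set.Icc 0 L, dist (E n r) (x (n + 1)) = L - r) :
    (∀ n, ∀ r ∈ Set.Icc 0 L, ∃ s, dist (E n r) (γ s) ≤ 50 * k) ∧
    (∀ s, ∃ n, ∃ r ∈ Set.Icc 0 L, dist (γ s) (E n r) ≤ 50 * k) := by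
  have hL100 : 100 * k ≤ L := by
    have := hfar 0 (0 + 1)
    rw [hL] at this
    simpa using this
  have part1 : ∀ n, ∀ r ∈ Set.Icc 0 L, ∃ s, dist (E n r) (γ s) ≤ 50 * k := by
    intro n r hr
    obtain ⟨N1, hN1⟩ := hx n
    obtain ⟨N2, hN2⟩ := hx (n + 1)
    set N := max 0 (max N1 N2) with hN
    have i1 : N1 ≤ N := (le_max_left _ _).trans (le_max_right _ _)
    have i2 : N2 ≤ N := (le_max_right _ _).trans (le_max_right _ _)
    refine lemC hk h hγ _ N (le_max_left _ _) (lemB hk h (hN1 N i1) (hN2 N i2) ?_ ?_)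
    · rw [hE1 n r hr, hE2 n r hr, hL]; ring
    · rw [hL]; exact hL100
  refine ⟨part1, fun s => ?_⟩
  have hL0 : (0 : ℝ) ∈ Set.Icc 0 L := ⟨le_rfl, by linarith⟩
  have hu : ∀ n, ∃ u, dist (x n) (γ u) ≤ 50 * k := by
    intro n
    obtain ⟨u, hu⟩ := part1 n 0 hL0
    have e := hE1 n 0 hL0
    rw [dist_eq_zero] at e
    exact ⟨u, by rwa [e]⟩
  choose u hu using hu
  have hu1 : ∀ n m : ℤ, 100 * k * |((n - m : ℤ) : ℝ)| - 120 * k ≤ |u n - u m| := by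
    intro n m
    have e1 := hfar n m
    have e2 := dist_triangle4 (x n) (γ (u n)) (γ (u m)) (x m)
    have e3 := (hγ (u n) (u m)).2
    have e4 := hu n
    have e5 := hu m
    rw [dist_comm] at e5
    linarith
  have hu2 : ∀ n, |u n - u (n + 1)| ≤ L + 120 * k := by
    intro n
    have e1 := hL n
    have e2 := dist_triangle4 (γ (u n)) (x n) (x (n + 1)) (γ (u (n + 1)))
    have e3 := (hγ (u n) (u (n + 1))).1
    have e4 := hu n
    have e5 := hu (n + 1)
    rw [dist_comm] at e4
    linarith
  obtain ⟨n1, hn1⟩ := coarse u (100 * k) (120 * k) (L + 120 * k) (by linarith) hu1 hu2 (s - 120 * k)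
  obtain ⟨n2, hn2⟩ := coarse (fun n => - u n) (100 * k) (120 * k) (L + 120 * k) (by linarith)
    (fun n m => by
      have := hu1 n m
      rwa [neg_sub_neg, abs_sub_comm])
    (fun n => by
      have := hu2 n
      rwa [neg_sub_neg, abs_sub_comm]) (-s - 120 * k)
  obtain ⟨N0, hN0⟩ := eventually_window _ hx (min n1 n2) (max n1 n2)
  set N := max N0 (max |s| (max |u n1| |u n2|)) with hNdef
  have hNN : N0 ≤ N := le_max_left _ _
  have hNr : max |s| (max |u n1| |u n2|) ≤ N := le_max_right _ _
  have hNs : |s| ≤ N := (le_max_left _ _).trans hNr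
  have hNr2 : max |u n1| |u n2| ≤ N := (le_max_right _ _).trans hNr
  have hN1 : |u n1| ≤ N := (le_max_left _ _).trans hNr2
  have hN2 : |u n2| ≤ N := (le_max_right _ _).trans hNr2
  rw [abs_le] at hNs hN1 hN2
  have hW := hN0 N hNN
  set z := γ s with hz
  set a := γ (-N) with ha
  set b := γ N with hb
  have hza := hγ.up (s := -N) (t := s) (by linarith)
  have hzb := hγ.up (s := s) (t := N) (by linarith)
  have hza' := hγ.low (-N) s
  have hzb' := hγ.low s N
  have hab := hγ.low (-N) N
  rw [dist_comm] at hza hza'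
  have hH : gpp z a b ≤ 60 * k := by unfold gpp; linarith
  have hQ1 : gpp z a b + 2 * k < gpp z a (x n1) := by
    have e1 := hγ.up (s := -N) (t := u n1) (by linarith)
    have e2 := hγ.low (u n1) s
    rw [dist_comm] at e2
    have e3 := dist_triangle a (γ (u n1)) (x n1)
    have e4 := dist_triangle z (x n1) (γ (u n1))
    have e5 := hu n1
    rw [dist_comm (γ (u n1))] at e3
    have : 62 * k < gpp z a (x n1) := by unfold gpp; linarith
    linarith
  have hQ2 : ¬ (gpp z a b + 2 * k < gpp z a (x n2)) := by
    intro hc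
    have e1 := hγ.up (s := u n2) (t := N) (by linarith)
    have e2 := hγ.low s (u n2)
    have e3 := dist_triangle (x n2) (γ (u n2)) b
    have e4 := dist_triangle z (x n2) (γ (u n2))
    have e5 := hu n2
    have : 62 * k < gpp z (x n2) b := by unfold gpp; linarith
    have := gpp_trans h hc (by linarith)
    linarith
  have hpair : ∃ n, gpp z (x n) (x (n + 1)) ≤ 64 * k := by
    obtain ⟨n, i1, i2, hn⟩ := int_change (fun n => gpp z a b + 2 * k < gpp z a (x n))
      (min n1 n2) (max n1 n2) min_le_max (by
        rcases le_total n1 n2 with hle | hle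
        · rw [min_eq_left hle, max_eq_right hle]; tauto
        · rw [min_eq_right hle, max_eq_left hle]; tauto)
    have w1 := hW n i1 i2.le
    have w2 := hW (n + 1) (by omega) (by omega)
    refine ⟨n, ?_⟩
    by_cases hq : gpp z a b + 2 * k < gpp z a (x n)
    · refine lemPair hk h hH w1 w2 (by rw [hL]; exact hL100) hq ?_
      by_contra hc
      push Not at hc
      tauto
    · rw [gpp_comm]
      refine lemPair hk h hH w2 w1 (by rw [dist_comm, hL]; exact hL100) ?_ (not_lt.1 hq)
      by_contra hc
      tauto
  obtain ⟨n, hn⟩ := hpair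
  set r := (dist z (x n) + dist (x n) (x (n + 1)) - dist z (x (n + 1))) / 2 with hr
  have hrI : r ∈ Set.Icc 0 L := by
    have t1 := dist_triangle z (x n) (x (n + 1))
    have t2 := dist_triangle z (x (n + 1)) (x n)
    rw [dist_comm (x (n + 1)) (x n)] at t2
    have t3 := hL n
    constructor <;> (rw [hr]; linarith)
  refine ⟨n, r, hrI, ?_⟩
  have := lemProj h (hE1 n r hrI) (by rw [hE2 n r hrI, hE1 n r hrI, hL]) hn
  linarith

/-- Let `Y` be geodesic and `k`-hyperbolic, `γ` a bi-infinite `(1,20k)`-quasigeodesic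
with `d_Haus(gγ, γ) ≤ 50k` for an isometry `g`, `p ∈ γ`, `ℓ ≥ 1` with
`d(p, g^{ℓn} p) ≥ 100k|n|`, `I` a geodesic from `p` to `g^ℓ p`, and
`β = ⋃_n g^{ℓn} I`. Then `d_Haus(β, γ) ≤ 50k` and `β` is a `(λ,λ)`-quasiline for a
constant `λ` depending only on `k`. -/
theorem broken_quasiaxis_is_quasiline (k : ℝ) (hk : 0 < k) :
    ∃ lam : ℝ, 0 < lam ∧
      ∀ (Y : Type) (_ : MetricSpace Y),
        -- Y is geodesic
        (∀ x y : Y, ∃ c : ℝ → Y, c 0 = x ∧ c (dist x y) = y ∧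
          ∀ s ∈ Set.Icc (0 : ℝ) (dist x y), ∀ u ∈ Set.Icc (0 : ℝ) (dist x y),
            dist (c s) (c u) = |s - u|) →
        -- Y is k-hyperbolic (four-point condition)
        (∀ x y z w : Y,
          dist x y + dist z w ≤ max (dist x z + dist y w) (dist x w + dist y z) + 2 * k) →
        ∀ (γ : ℝ → Y),
          -- γ is a bi-infinite (1,20k)-quasigeodesic
          (∀ s t : ℝ, |s - t| - 20 * k ≤ dist (γ s) (γ t) ∧
            dist (γ s) (γ t) ≤ |s - t| + 20 * k) →
          ∀ g : Y ≃ᵢ Y,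
            -- d_Haus(gγ, γ) ≤ 50k
            (∀ s : ℝ, ∃ u : ℝ, dist (g (γ s)) (γ u) ≤ 50 * k) →
            (∀ s : ℝ, ∃ u : ℝ, dist (γ s) (g (γ u)) ≤ 50 * k) →
            ∀ p : Y, p ∈ Set.range γ →
              ∀ ℓ : ℕ, 1 ≤ ℓ →
                (∀ n : ℤ, 100 * k * |(n : ℝ)| ≤ dist p ((g ^ ((ℓ : ℤ) * n)) p)) →
                ∀ I : ℝ → Y,
                  (I 0 = p ∧ I (dist p ((g ^ (ℓ : ℤ)) p)) = (g ^ (ℓ : ℤ)) p ∧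
                    ∀ s ∈ Set.Icc (0 : ℝ) (dist p ((g ^ (ℓ : ℤ)) p)),
                      ∀ u ∈ Set.Icc (0 : ℝ) (dist p ((g ^ (ℓ : ℤ)) p)),
                        dist (I s) (I u) = |s - u|) →
                  -- β = ⋃ n, g^{ℓn} I
                  (∀ y ∈ ⋃ n : ℤ, (g ^ ((ℓ : ℤ) * n)) ''
                      (I '' Set.Icc (0 : ℝ) (dist p ((g ^ (ℓ : ℤ)) p))),
                    ∃ s : ℝ, dist y (γ s) ≤ 50 * k) ∧
                  (∀ s : ℝ, ∃ y ∈ ⋃ n : ℤ, (g ^ ((ℓ : ℤ) * n)) ''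
                      (I '' Set.Icc (0 : ℝ) (dist p ((g ^ (ℓ : ℤ)) p))),
                    dist (γ s) y ≤ 50 * k) ∧
                  ∃ f : ℝ → Y,
                    (∀ t : ℝ, f t ∈ ⋃ n : ℤ, (g ^ ((ℓ : ℤ) * n)) ''
                      (I '' Set.Icc (0 : ℝ) (dist p ((g ^ (ℓ : ℤ)) p)))) ∧
                    (∀ y ∈ ⋃ n : ℤ, (g ^ ((ℓ : ℤ) * n)) ''
                        (I '' Set.Icc (0 : ℝ) (dist p ((g ^ (ℓ : ℤ)) p))),
                      ∃ t : ℝ, dist y (f t) ≤ lam) ∧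
                    (∀ s t : ℝ, (1 / lam) * |s - t| - lam ≤ dist (f s) (f t) ∧
                      dist (f s) (f t) ≤ lam * |s - t| + lam) := by
  refine ⟨1 + 120 * k, by linarith, ?_⟩
  intro Y _ _ h γ hγ g hg1 hg2 p hp ℓ _ hfar I hI
  obtain ⟨t0, rfl⟩ := hp
  obtain ⟨hI0, hI1, hI⟩ := hI
  set p := γ t0 with hp
  set L := dist p ((g ^ (ℓ : ℤ)) p) with hLdef
  have hL0 : 0 ≤ L := dist_nonneg
  have hsucc : ∀ n : ℤ, (g ^ ((ℓ : ℤ) * (n + 1))) p = (g ^ ((ℓ : ℤ) * n)) ((g ^ (ℓ : ℤ)) p) := by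
    intro n
    rw [← IsometryEquiv.mul_apply, ← zpow_add, mul_add, mul_one]
  have hqg : ∀ m : ℤ, QG k (fun s => (g ^ m) (γ s)) := by
    intro m s t
    simp only [IsometryEquiv.dist_eq]
    exact hγ s t
  have key := main_bounds hk h hγ L (fun n => (g ^ ((ℓ : ℤ) * n)) p)
    (fun n r => (g ^ ((ℓ : ℤ) * n)) (I r))
    (by
      intro n
      obtain ⟨D, hD⟩ := zpow_close g hg1 hg2 ((ℓ : ℤ) * n)
      exact lemA hk h hγ (hqg _) D hD t0)
    (by
      intro n m
      have e := hfar (n - m)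
      rw [← (g ^ ((ℓ : ℤ) * m)).dist_eq, ← IsometryEquiv.mul_apply, ← zpow_add, ← mul_add,
        add_sub_cancel, dist_comm] at e
      exact e)
    (by
      intro n
      simp only [hsucc, IsometryEquiv.dist_eq]
      rfl)
    (by
      intro n r hr
      simp only [IsometryEquiv.dist_eq]
      rw [← hI0, hI 0 ⟨le_rfl, hL0⟩ r hr, zero_sub, abs_neg, abs_of_nonneg hr.1])
    (by
      intro n r hr
      simp only [hsucc, IsometryEquiv.dist_eq]
      rw [← hI1, hI r hr L ⟨hL0, le_rfl⟩, abs_of_nonpos (by linarith [hr.2])]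
      ring)
  obtain ⟨k1, k2⟩ := key
  have b1 : ∀ y ∈ ⋃ n : ℤ, (g ^ ((ℓ : ℤ) * n)) '' (I '' Set.Icc (0 : ℝ) L),
      ∃ s : ℝ, dist y (γ s) ≤ 50 * k := by
    intro y hy
    obtain ⟨n, hy⟩ := Set.mem_iUnion.1 hy
    obtain ⟨_, ⟨r, hr, rfl⟩, rfl⟩ := hy
    exact k1 n r hr
  have b2 : ∀ s : ℝ, ∃ y ∈ ⋃ n : ℤ, (g ^ ((ℓ : ℤ) * n)) '' (I '' Set.Icc (0 : ℝ) L),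
      dist (γ s) y ≤ 50 * k := by
    intro s
    obtain ⟨n, r, hr, hd⟩ := k2 s
    exact ⟨_, Set.mem_iUnion.2 ⟨n, _, ⟨r, hr, rfl⟩, rfl⟩, hd⟩
  refine ⟨b1, b2, ?_⟩
  choose f hf hfd using b2
  refine ⟨f, hf, ?_, ?_⟩
  · intro y hy
    obtain ⟨s, hs⟩ := b1 y hy
    refine ⟨s, ?_⟩
    have := dist_triangle y (γ s) (f s)
    have := hfd s
    linarith
  · intro s t
    have e1 := hfd s
    have e2 := hfd t
    have e3 := dist_triangle4 (γ s) (f s) (f t) (γ t)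
    have e4 := dist_triangle4 (f s) (γ s) (γ t) (f t)
    rw [dist_comm (f t)] at e3
    rw [dist_comm (f s) (γ s)] at e4
    obtain ⟨q1, q2⟩ := hγ s t
    have hn := abs_nonneg (s - t)
    have hinv : 1 / (1 + 120 * k) ≤ 1 := by
      rw [div_le_one (by linarith)]; linarith
    have m1 := mul_le_mul_of_nonneg_right hinv hn
    have m2 : 0 ≤ k * |s - t| := by positivity
    constructor
    · linarith
    · linarith
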